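/- arXiv:1205.5134 — 4 statements merged into one kernel-verified Lean document; each statement's English description precedes it below -/
import Mathlib

section
/- Let K be a field and σ a ring automorphism of K with σ² = id and σ ≠ id. Let γ, θ ∈ K with γ ≠ 0, σ(γ) = γ and σ(θ) = θ. Take τ = σ in the construction. Then for all c, d, e, f ∈ K, the 4×4 matrix α_θ(M(c,d), M(e,f)) commutes with every element of A if and only if σ(c) = c, d = 0, e = 0 and σ(f) = f. (Equivalently, the set of elements of A commuting with all of A is exactly α_θ(F, jF), where F = K^⟨σ⟩.) -/
open Matrix

noncomputable section

/-- The left-regular representation `M(c,d) = [[c, γ·σ(d)], [d, σ(c)]]` of the element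
`c + jd` of the quaternion algebra `(K/F, σ, γ)`. -/
def qMat {K : Type} [Field K] (σ : RingAut K) (γ : K) (c d : K) : Matrix (Fin 2) (Fin 2) K :=
  !![c, γ * σ d; d, σ c]

/-- The iterated construction `α_θ(X, Y) = [[X, θ·τ(Y)], [Y, τ(X)]]` for `2 × 2` blocks. -/
def alphaTheta {K : Type} [Field K] (θ : K) (τ : RingAut K)
    (X Y : Matrix (Fin 2) (Fin 2) K) :
    Matrix (Fin 2 ⊕ Fin 2) (Fin 2 ⊕ Fin 2) K :=
  Matrix.fromBlocks X (θ • Y.map ⇑τ) Y (X.map ⇑τ)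

/-- The iterated code `A = {α_θ(M(c,d), M(e,f)) : c, d, e, f ∈ K}` (case `τ = σ`). -/
def iterQuatCode {K : Type} [Field K] (σ τ : RingAut K) (γ θ : K) :
    Set (Matrix (Fin 2 ⊕ Fin 2) (Fin 2 ⊕ Fin 2) K) :=
  {W | ∃ c d e f : K, W = alphaTheta θ τ (qMat σ γ c d) (qMat σ γ e f)}

/-- with `τ = σ`, `σ² = id`, `σ ≠ id`, `γ ≠ 0` fixed by `σ` and `θ` fixed
by `σ`, the element `α_θ(M(c,d), M(e,f))` commutes with every element of `A` iff
`σ(c) = c`, `d = 0`, `e = 0` and `σ(f) = f`; i.e. the commutant of `A` in `A` is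
exactly `α_θ(F, jF)` where `F = K^⟨σ⟩`. -/
theorem stmt4 {K : Type} [Field K] (σ : RingAut K)
    (hσ2 : σ * σ = 1) (hσ : σ ≠ 1)
    (γ θ : K) (hγ : γ ≠ 0) (hσγ : σ γ = γ) (hσθ : σ θ = θ) :
    ∀ c d e f : K,
      (∀ W ∈ iterQuatCode σ σ γ θ,
          alphaTheta θ σ (qMat σ γ c d) (qMat σ γ e f) * W =
            W * alphaTheta θ σ (qMat σ γ c d) (qMat σ γ e f)) ↔
        (σ c = c ∧ d = 0 ∧ e = 0 ∧ σ f = f) := by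
  have h2 : ∀ x, σ (σ x) = x := fun x => by
    have := congrArg (fun g : RingAut K => g x) hσ2
    simpa using this
  obtain ⟨k, hk⟩ : ∃ k, σ k ≠ k := by
    by_contra h
    push Not at h
    exact hσ (RingEquiv.ext h)
  have hk' : k - σ k ≠ 0 := fun h => hk (sub_eq_zero.mp h).symm
  intro c d e f
  constructor
  · intro h
    have h1 := h _ ⟨k, 0, 0, 0, rfl⟩
    have h3 := h _ ⟨0, 1, 0, 0, rfl⟩
    simp only [alphaTheta, Matrix.fromBlocks_multiply, Matrix.fromBlocks_inj] at h1 h3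
    obtain ⟨a1, -, a2, -⟩ := h1
    obtain ⟨b1, -, b2, -⟩ := h3
    have a11 := congrFun (congrFun a1 1) 0
    have a21 := congrFun (congrFun a2 0) 0
    have b11 := congrFun (congrFun b1 1) 0
    have b21 := congrFun (congrFun b2 0) 0
    simp [qMat, Matrix.mul_apply, Fin.sum_univ_two] at a11 a21 b11 b21
    refine ⟨?_, ?_, ?_, ?_⟩
    · grind
    · have : d * (k - σ k) = 0 := by linear_combination a11
      exact (mul_eq_zero.mp this).resolve_right hk'
    · have : e * (k - σ k) = 0 := by linear_combination a21
      exact (mul_eq_zero.mp this).resolve_right hk'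
    · grind
  · rintro ⟨hc, rfl, rfl, hf⟩ W ⟨c', d', e', f', rfl⟩
    simp only [alphaTheta, Matrix.fromBlocks_multiply, Matrix.fromBlocks_inj]
    refine ⟨?_, ?_, ?_, ?_⟩ <;> ext i j <;> fin_cases i <;> fin_cases j <;>
      simp [qMat, Matrix.mul_apply, Matrix.vecMul, dotProduct, Fin.sum_univ_two, hc, hf, h2, hσγ] <;> ring
end
end

section
/- Let K be a field and σ, τ ring automorphisms of K with σ² = id, τ² = id, σ∘τ = τ∘σ, σ ≠ id, τ ≠ id and τ ≠ σ. Let γ, θ ∈ K with γ ≠ 0, σ(γ) = γ, τ(γ) = γ, σ(θ) = θ and τ(θ) = θ. Then for all c, d, e, f ∈ K, the 4×4 matrix α_θ(M(c,d), M(e,f)) commutes with every element of A if and only if σ(c) = c, τ(c) = c, d = 0, e = 0 and f = 0. (Equivalently, the set of elements of A commuting with all of A is exactly α_θ(F^⟨τ⟩, 0), where F = K^⟨σ⟩.) -/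
open Matrix

noncomputable section

/-- with `σ, τ` distinct commuting order-two automorphisms (`τ ∉ ⟨σ⟩`)
fixing `γ ≠ 0` and `θ`, the element `α_θ(M(c,d), M(e,f))` commutes with every element
of `A` iff `σ(c) = c`, `τ(c) = c`, `d = 0`, `e = 0` and `f = 0`; i.e. the commutant of
`A` in `A` is exactly `α_θ(F^⟨τ⟩, 0)` where `F = K^⟨σ⟩`. -/
theorem stmt5 {K : Type} [Field K] (σ τ : RingAut K)
    (hσ2 : σ * σ = 1) (hτ2 : τ * τ = 1) (hcomm : σ * τ = τ * σ)
    (hσ : σ ≠ 1) (hτ : τ ≠ 1) (hτσ : τ ≠ σ)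
    (γ θ : K) (hγ : γ ≠ 0) (hσγ : σ γ = γ) (hτγ : τ γ = γ) (hσθ : σ θ = θ) (hτθ : τ θ = θ) :
    ∀ c d e f : K,
      (∀ W ∈ iterQuatCode σ τ γ θ,
          alphaTheta θ τ (qMat σ γ c d) (qMat σ γ e f) * W =
            W * alphaTheta θ τ (qMat σ γ c d) (qMat σ γ e f)) ↔
        (σ c = c ∧ τ c = c ∧ d = 0 ∧ e = 0 ∧ f = 0) := by
  have s2 : ∀ x, σ (σ x) = x := fun x => by
    have := DFunLike.congr_fun hσ2 x; simpa using this
  intro c d e f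
  constructor
  · intro h
    have key : ∀ k l m n : K, _ := fun k l m n => h _ ⟨k, l, m, n, rfl⟩
    have hk : ∀ k : K, d * k = σ k * d ∧ e * k = τ k * e ∧ f * k = τ (σ k) * f := by
      intro k
      have h0 := key k 0 0 0
      have h1 := congrFun (congrFun h0 (Sum.inl 1)) (Sum.inl 0)
      have h2 := congrFun (congrFun h0 (Sum.inr 0)) (Sum.inl 0)
      have h3 := congrFun (congrFun h0 (Sum.inr 1)) (Sum.inl 0)
      simp [alphaTheta, qMat, Matrix.mul_apply, Fin.sum_univ_two] at h1 h2 h3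
      exact ⟨h1, h2, h3⟩
    have hd : d = 0 := by
      by_contra hd
      exact hσ (RingEquiv.ext fun k => mul_right_cancel₀ hd
        ((hk k).1.symm.trans (mul_comm d k)))
    have he : e = 0 := by
      by_contra hd
      exact hτ (RingEquiv.ext fun k => mul_right_cancel₀ hd
        ((hk k).2.1.symm.trans (mul_comm e k)))
    have hf : f = 0 := by
      by_contra hd
      refine hτσ (RingEquiv.ext fun k => mul_right_cancel₀ hd ?_)
      have := (hk (σ k)).2.2
      rw [s2] at this
      rw [← this, mul_comm]
    subst hd he hf
    have h1 := congrFun (congrFun (key 0 1 0 0) (Sum.inl 1)) (Sum.inl 0)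
    have h2 := congrFun (congrFun (key 0 0 1 0) (Sum.inr 0)) (Sum.inl 0)
    simp [alphaTheta, qMat, Matrix.mul_apply, Fin.sum_univ_two] at h1 h2
    exact ⟨h1, h2, rfl, rfl, rfl⟩
  · rintro ⟨h1, h2, rfl, rfl, rfl⟩ W -
    have : alphaTheta θ τ (qMat σ γ c 0) (qMat σ γ 0 0) = c • (1 : Matrix _ _ K) := by
      ext i j
      rcases i with i | i <;> rcases j with j | j <;> fin_cases i <;> fin_cases j <;>
        simp [alphaTheta, qMat, h1, h2, Matrix.one_apply]
    rw [this]
    simp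
end
end

section
/- Let F = ℚ(√−7). Then for every z in the quaternion algebra ℍ[F, −1, −1], one has z·σ(z) ≠ −17. (This is the full-diversity condition for the iterated MIDO Silver code with θ = −17: θ is not of the form z·σ(z) for z in the quaternion algebra (−1,−1) over ℚ(√−7).) -/
open Polynomial Quaternion

noncomputable section

/-- The quadratic number field `F = ℚ(√−7)`, realized as `ℚ[X]/(X² + 7)`. -/
def Qsqrtm7 : Type := AdjoinRoot ((X : ℚ[X]) ^ 2 + C 7)

instance : CommRing Qsqrtm7 := inferInstanceAs (CommRing (AdjoinRoot ((X : ℚ[X]) ^ 2 + C 7)))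

/-- The automorphism `σ` of the quaternion algebra `ℍ[F, a, γ]` given by
`σ(x₀ + x₁i + x₂j + x₃k) = x₀ − x₁i + x₂j − x₃k`. -/
def qsigma {F : Type} [CommRing F] (a γ : F) (z : ℍ[F, a, γ]) : ℍ[F, a, γ] :=
  ⟨z.re, -z.imI, z.imJ, -z.imK⟩


lemma aux_zmod8 : ∀ a b c : ZMod (2 ^ 3), a ^ 2 + b ^ 2 + c ^ 2 ≠ -17 := by decide

lemma aux_zmod4 : ∀ a b c : ZMod (2 ^ 2), a ^ 2 + b ^ 2 + c ^ 2 = 0 →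
    2 * a = 0 ∧ 2 * b = 0 ∧ 2 * c = 0 := by decide

lemma aux_two_dvd (a : ℤ_[2]) (h : 2 * PadicInt.toZModPow 2 a = 0) : ∃ k, a = 2 * k := by
  have h1 : (2 * a) ∈ RingHom.ker (PadicInt.toZModPow (p := 2) 2) := by
    rw [RingHom.mem_ker, map_mul, map_ofNat]; exact h
  rw [PadicInt.ker_toZModPow, Ideal.mem_span_singleton] at h1
  obtain ⟨k, hk⟩ := h1
  refine ⟨k, ?_⟩
  have h2 : (2 : ℤ_[2]) ≠ 0 := two_ne_zero
  apply mul_left_cancel₀ h2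
  rw [hk]; push_cast; ring

lemma aux_int (n : ℕ) : ∀ a b c : ℤ_[2], a ^ 2 + b ^ 2 + c ^ 2 ≠ -17 * 4 ^ n := by
  induction n with
  | zero =>
    intro a b c h
    have := congrArg (PadicInt.toZModPow (p := 2) 3) h
    simp only [map_add, map_pow, map_mul, map_neg, map_ofNat, pow_zero, mul_one] at this
    exact aux_zmod8 _ _ _ this
  | succ n ih =>
    intro a b c h
    have h0 := congrArg (PadicInt.toZModPow (p := 2) 2) h
    simp only [map_add, map_pow, map_mul, map_neg, map_ofNat] at h0
    have h4 : (4 : ZMod (2 ^ 2)) = 0 := by decide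
    have h5 : (-17 * 4 ^ (n + 1) : ZMod (2 ^ 2)) = 0 := by
      rw [pow_succ]; linear_combination (-17 * 4 ^ n) * h4
    replace h0 := h0.trans h5
    obtain ⟨ha, hb, hc⟩ := aux_zmod4 _ _ _ h0
    obtain ⟨a, rfl⟩ := aux_two_dvd a ha
    obtain ⟨b, rfl⟩ := aux_two_dvd b hb
    obtain ⟨c, rfl⟩ := aux_two_dvd c hc
    apply ih a b c
    have h2 : (4 : ℤ_[2]) ≠ 0 := by
      have h3 : (4 : ℤ_[2]) = 2 * 2 := by norm_num
      rw [h3]; exact mul_ne_zero two_ne_zero two_ne_zero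
    apply mul_left_cancel₀ h2
    linear_combination h

lemma aux_rat (a b c : ℚ_[2]) : a ^ 2 + b ^ 2 + c ^ 2 ≠ -17 := by
  intro h
  obtain ⟨n, hn⟩ := exists_pow_lt_of_lt_one
    (show (0:ℝ) < 1 / (‖a‖ + ‖b‖ + ‖c‖ + 1) by positivity) (show (1/2 : ℝ) < 1 by norm_num)
  have h2 : ‖(2 : ℚ_[2])‖ = 1/2 := by
    have := Padic.norm_p (p := 2)
    simpa using this
  rw [lt_div_iff₀ (by positivity)] at hn
  have key : ∀ x : ℚ_[2], ‖x‖ ≤ ‖a‖ + ‖b‖ + ‖c‖ + 1 → ‖2 ^ n * x‖ ≤ 1 := by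
    intro x hx
    rw [norm_mul, norm_pow, h2]
    refine le_trans (mul_le_mul_of_nonneg_left hx (by positivity)) hn.le
  have ha := norm_nonneg a
  have hb := norm_nonneg b
  have hc := norm_nonneg c
  apply aux_int n ⟨_, key a (by linarith)⟩ ⟨_, key b (by linarith)⟩ ⟨_, key c (by linarith)⟩
  apply Subtype.ext
  push_cast
  have h4 : (4 : ℚ_[2]) ^ n = (2 ^ n) ^ 2 := by rw [← pow_mul, mul_comm, pow_mul]; norm_num
  change (2 ^ n * a) ^ 2 + (2 ^ n * b) ^ 2 + (2 ^ n * c) ^ 2 = -17 * 4 ^ n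
  rw [h4]
  linear_combination (2 ^ n) ^ 2 * h

lemma aux_root : ∃ t : ℚ_[2], t ^ 2 + 7 = 0 := by
  have h7 : ‖(8 : ℤ_[2])‖ = 1 / 8 := by
    have := PadicInt.norm_p_pow (p := 2) 3
    norm_num at this ⊢
    exact this
  have h2 : ‖(2 : ℤ_[2])‖ = 1 / 2 := by
    have := PadicInt.norm_p (p := 2)
    norm_num at this ⊢
    exact this
  obtain ⟨z, hz, -⟩ := hensels_lemma (p := 2) (R := ℤ_[2]) (F := (X ^ 2 + C 7 : ℤ_[2][X])) (a := 1) (by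
    have e1 : (aeval (1 : ℤ_[2])) (X ^ 2 + C 7 : ℤ_[2][X]) = 8 := by simp; norm_num
    have e2 : (aeval (1 : ℤ_[2])) (derivative (X ^ 2 + C 7 : ℤ_[2][X])) = 2 := by simp; norm_num
    rw [e1, e2, h7, h2]; norm_num)
  refine ⟨z, ?_⟩
  simp at hz
  have := congrArg (fun x : ℤ_[2] => (x : ℚ_[2])) hz
  push_cast at this
  exact this

def aux_hom {K : Type} [Field K] [CharZero K] [Algebra ℚ K] (t : K) (ht : t ^ 2 + 7 = 0) : Qsqrtm7 →+* K :=
  AdjoinRoot.lift (algebraMap ℚ K) t (by simpa using ht)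

def auxOf : ℚ →+* Qsqrtm7 := AdjoinRoot.of ((X : ℚ[X]) ^ 2 + C 7)

def auxT : Qsqrtm7 := AdjoinRoot.root ((X : ℚ[X]) ^ 2 + C 7)

lemma aux_hom_of {K : Type} [Field K] [CharZero K] [Algebra ℚ K] (t : K) (ht : t ^ 2 + 7 = 0) (a : ℚ) :
    aux_hom t ht (auxOf a) = algebraMap ℚ K a := AdjoinRoot.lift_of _

lemma aux_hom_T {K : Type} [Field K] [CharZero K] [Algebra ℚ K] (t : K) (ht : t ^ 2 + 7 = 0) :
    aux_hom t ht auxT = t := AdjoinRoot.lift_root _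

lemma auxT_sq : auxT ^ 2 = -7 := by
  have h := AdjoinRoot.eval₂_root ((X : ℚ[X]) ^ 2 + C 7)
  have h' : auxT ^ 2 + auxOf 7 = 0 := by
    simp only [eval₂_add, eval₂_pow, eval₂_X, eval₂_C] at h
    exact h
  rw [map_ofNat] at h'
  linear_combination h'

lemma aux_rep (x : Qsqrtm7) : ∃ a b : ℚ, x = auxOf a + auxOf b * auxT := by
  have key : ∀ p : ℚ[X], ∃ a b : ℚ,
      (AdjoinRoot.mk ((X : ℚ[X]) ^ 2 + C 7) p : Qsqrtm7) = auxOf a + auxOf b * auxT := by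
    intro p
    induction p using Polynomial.induction_on with
    | C a => exact ⟨a, 0, by rw [map_zero, zero_mul, add_zero]; rfl⟩
    | add p q hp hq =>
      obtain ⟨a, b, h⟩ := hp
      obtain ⟨c, d, h'⟩ := hq
      refine ⟨a + c, b + d, ?_⟩
      rw [map_add (AdjoinRoot.mk _)]
      refine (congrArg₂ (fun x y : Qsqrtm7 => x + y) h h').trans ?_
      simp only [map_add]; ring
    | monomial n c hp =>
      obtain ⟨a, b, h⟩ := hp
      refine ⟨-7 * b, a, ?_⟩
      have hX : (C c * X ^ (n + 1) : ℚ[X]) = C c * X ^ n * X := by ring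
      rw [hX, map_mul (AdjoinRoot.mk _)]
      refine (congrArg (fun x : Qsqrtm7 => x * auxT) h).trans ?_
      simp only [map_mul, map_neg, map_ofNat]
      linear_combination auxOf b * auxT_sq
  obtain ⟨p, hp⟩ := AdjoinRoot.mk_surjective (g := (X : ℚ[X]) ^ 2 + C 7) x
  obtain ⟨a, b, h⟩ := key p
  exact ⟨a, b, hp.symm.trans h⟩

lemma aux_ct : (Complex.I * (Real.sqrt 7 : ℂ)) ^ 2 + 7 = 0 := by
  rw [mul_pow, Complex.I_sq, ← Complex.ofReal_pow, Real.sq_sqrt (by norm_num)]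
  push_cast; ring

lemma aux_val (a b : ℚ) : aux_hom _ aux_ct (auxOf a + auxOf b * auxT) = ⟨a, b * Real.sqrt 7⟩ := by
  rw [map_add, map_mul, aux_hom_of, aux_hom_of, aux_hom_T]
  apply Complex.ext <;> simp

lemma aux_inj (x : Qsqrtm7) (h : aux_hom _ aux_ct x = 0) : x = 0 := by
  obtain ⟨a, b, rfl⟩ := aux_rep x
  rw [aux_val] at h
  have h1 := congrArg Complex.re h
  have h2 := congrArg Complex.im h
  simp at h1 h2
  subst h1
  subst h2
  simp

lemma aux_zero_mul (x y : Qsqrtm7) (h : x * y = 0) : x = 0 ∨ y = 0 := by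
  have := congrArg (aux_hom _ aux_ct) h
  rw [map_mul, map_zero, mul_eq_zero] at this
  exact this.imp (aux_inj x) (aux_inj y)

lemma aux_two (x : Qsqrtm7) (h : 2 * x = 0) : x = 0 := by
  have := congrArg (aux_hom _ aux_ct) h
  rw [map_mul, map_zero, map_ofNat, mul_eq_zero] at this
  exact aux_inj x (this.resolve_left two_ne_zero)

lemma aux_17 (x : Qsqrtm7) : x ^ 2 ≠ 17 := by
  intro h
  obtain ⟨a, b, rfl⟩ := aux_rep x
  have h := congrArg (aux_hom _ aux_ct) h
  rw [map_pow, aux_val, map_ofNat, sq] at h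
  have h1 := congrArg Complex.re h
  have h2 := congrArg Complex.im h
  simp at h1 h2
  have h3 : Real.sqrt 7 * Real.sqrt 7 = 7 := Real.mul_self_sqrt (by norm_num)
  have h7 : Real.sqrt 7 ≠ 0 := by positivity
  have h1' : (a:ℝ) * a - 7 * (b * b) = 17 := by linear_combination h1 + b * b * h3
  have h2' : (a:ℝ) * b = 0 := by
    apply mul_right_cancel₀ h7
    linear_combination h2 / 2
  rcases mul_eq_zero.1 h2' with h | h
  · rw [h] at h1'; nlinarith [mul_self_nonneg (b:ℝ)]
  · rw [h] at h1'
    have hs : IsSquare (17 : ℚ) := ⟨a, by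
      have : (a:ℝ) * a = 17 := by linarith
      exact_mod_cast this.symm⟩
    have hs' : IsSquare ((17 : ℕ) : ℚ) := by exact_mod_cast hs
    rw [Rat.isSquare_natCast_iff] at hs'
    obtain ⟨m, hm⟩ := hs'
    have hm5 : m < 5 := by nlinarith
    interval_cases m <;> omega

theorem stmt13 :
    ∀ z : ℍ[Qsqrtm7, -1, -1],
      z * qsigma (-1) (-1) z ≠ ((-17 : Qsqrtm7) : ℍ[Qsqrtm7, -1, -1]) := by
  intro z h
  have e0 : (z * qsigma (-1) (-1) z).re = -17 := congrArg QuaternionAlgebra.re h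
  have e1 : (z * qsigma (-1) (-1) z).imI = 0 := congrArg QuaternionAlgebra.imI h
  have e2 : (z * qsigma (-1) (-1) z).imJ = 0 := congrArg QuaternionAlgebra.imJ h
  have e3 : (z * qsigma (-1) (-1) z).imK = 0 := congrArg QuaternionAlgebra.imK h
  simp only [QuaternionAlgebra.re_mul, QuaternionAlgebra.imI_mul, QuaternionAlgebra.imJ_mul,
    QuaternionAlgebra.imK_mul, qsigma] at e0 e1 e2 e3
  have f0 : z.re * z.imJ = 0 := aux_two _ (by linear_combination e2)
  have f1 : z.imI * z.imJ = 0 := aux_two _ (by linear_combination e3)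
  have f3 : z.imK * z.imJ = 0 := aux_two _ (by linear_combination -e1)
  by_cases hj : z.imJ = 0
  · obtain ⟨t, ht⟩ := aux_root
    rw [hj] at e0
    have := congrArg (aux_hom t ht)
      (show z.re ^ 2 + z.imI ^ 2 + z.imK ^ 2 = -17 by linear_combination e0)
    simp only [map_add, map_pow, map_neg, map_ofNat] at this
    exact aux_rat _ _ _ this
  · have g0 := (aux_zero_mul _ _ f0).resolve_right hj
    have g1 := (aux_zero_mul _ _ f1).resolve_right hj
    have g3 := (aux_zero_mul _ _ f3).resolve_right hj
    rw [g0, g1, g3] at e0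
    exact aux_17 z.imJ (by linear_combination -e0)
end
end

section
/- Let F = ℚ(i) (a field obtained by adjoining to ℚ an element ι with ι² = −1). Then for every z in the quaternion algebra ℍ[F, 5, ι], one has z·σ(z) ≠ 1 − ι. (This is the full-diversity condition for the iterated Golden code with θ = 1 − i: θ is not of the form z·σ(z) for z in the quaternion algebra (5, i) over ℚ(i).) -/
open Polynomial Quaternion

noncomputable section

/-- The quadratic number field `F = ℚ(i)`, realized as `ℚ[X]/(X² + 1)`. -/
def QI : Type := AdjoinRoot ((X : ℚ[X]) ^ 2 + C 1)

instance : CommRing QI := inferInstanceAs (CommRing (AdjoinRoot ((X : ℚ[X]) ^ 2 + C 1)))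

/-- The element `ι = i ∈ ℚ(i)`, a square root of `−1`. -/
def iota : QI := AdjoinRoot.root ((X : ℚ[X]) ^ 2 + C 1)

instance fact5 : Fact (Nat.Prime 5) := ⟨by norm_num⟩

lemma norm_one_of (x : ℤ_[5]) (h : PadicInt.toZMod x ≠ 0) : ‖x‖ = 1 := by
  by_contra hne
  have hlt : ‖x‖ < 1 := lt_of_le_of_ne (PadicInt.norm_le_one x) hne
  apply h
  rw [← RingHom.mem_ker, PadicInt.ker_toZMod, IsLocalRing.mem_maximalIdeal,
    PadicInt.mem_nonunits]
  exact hlt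

lemma exists_I : ∃ I : ℤ_[5], I ^ 2 = -1 ∧ PadicInt.toZMod I = 3 := by
  have h10 : ‖(10 : ℤ_[5])‖ < 1 := by
    have := (PadicInt.norm_int_lt_one_iff_dvd (p := 5) 10).2 (by norm_num)
    simpa using this
  have h6 : ‖(6 : ℤ_[5])‖ = 1 := by
    apply norm_one_of
    rw [map_ofNat]; decide
  obtain ⟨z, hz, hz1, -⟩ := hensels_lemma (R := ℤ_[5]) (p := 5) (F := (X ^ 2 + 1 : ℤ_[5][X])) (a := (3 : ℤ_[5]))
    (by
      have e1 : aeval (3 : ℤ_[5]) (X ^ 2 + 1 : ℤ_[5][X]) = 10 := by simp; norm_num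
      have e2 : aeval (3 : ℤ_[5]) (derivative (X ^ 2 + 1 : ℤ_[5][X])) = 6 := by
        simp; norm_num
      rw [e1, e2, h6]; simpa using h10)
  refine ⟨z, ?_, ?_⟩
  · simp at hz
    linear_combination hz
  · have e2 : aeval (3 : ℤ_[5]) (derivative (X ^ 2 + 1 : ℤ_[5][X])) = 6 := by
      simp; norm_num
    rw [e2, h6] at hz1
    by_contra hne
    have := norm_one_of (z - 3) (by
      rw [map_sub, map_ofNat]; exact sub_ne_zero.2 hne)
    linarith

lemma form_norm (u : ℤ_[5]) (hu : PadicInt.toZMod u = 2 ∨ PadicInt.toZMod u = 3)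
    (x y : ℚ_[5]) (h : x ≠ 0 ∨ y ≠ 0) :
    ∃ c : ℚ_[5], c ≠ 0 ∧ ‖x ^ 2 - u * y ^ 2‖ = ‖c‖ ^ 2 := by
  have key : ∀ r : ZMod 5, ∀ s : ZMod 5, (s = 2 ∨ s = 3) → 1 - s * r ^ 2 ≠ 0 ∧ r ^ 2 - s ≠ 0 := by
    decide
  rcases le_total ‖y‖ ‖x‖ with hle | hle
  · have hx : x ≠ 0 := by
      rintro rfl
      simp at hle
      simp [hle] at h
    refine ⟨x, hx, ?_⟩
    let t : ℤ_[5] := ⟨y / x, by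
      rw [norm_div]; exact div_le_one_of_le₀ hle (norm_nonneg _)⟩
    have ht : ((1 - u * t ^ 2 : ℤ_[5]) : ℚ_[5]) = 1 - u * (y / x) ^ 2 := by
      push_cast; rfl
    have hn := norm_one_of (1 - u * t ^ 2) (by
      simp only [map_sub, map_mul, map_pow, map_one]; exact (key _ _ hu).1)
    rw [PadicInt.norm_def, ht] at hn
    have : x ^ 2 - u * y ^ 2 = x ^ 2 * (1 - u * (y / x) ^ 2) := by field_simp
    rw [this, norm_mul, hn, norm_pow, mul_one]
  · have hy : y ≠ 0 := by
      rintro rfl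
      simp at hle
      simp [hle] at h
    refine ⟨y, hy, ?_⟩
    let t : ℤ_[5] := ⟨x / y, by
      rw [norm_div]; exact div_le_one_of_le₀ hle (norm_nonneg _)⟩
    have ht : ((t ^ 2 - u : ℤ_[5]) : ℚ_[5]) = (x / y) ^ 2 - u := by
      push_cast; rfl
    have hn := norm_one_of (t ^ 2 - u) (by
      simp only [map_sub, map_pow]; exact (key _ _ hu).2)
    rw [PadicInt.norm_def, ht] at hn
    have : x ^ 2 - u * y ^ 2 = y ^ 2 * ((x / y) ^ 2 - u) := by field_simp
    rw [this, norm_mul, hn, norm_pow, mul_one]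

lemma case1 (I : ℤ_[5]) (hI : PadicInt.toZMod I = 3) (a b c : ℚ_[5])
    (h : a ^ 2 - 5 * b ^ 2 + 5 * I * c ^ 2 = 1 - I) : False := by
  obtain ⟨d, hd, hd'⟩ := form_norm (1 - I) (by
    right; rw [map_sub, map_one, hI]; decide) a 1 (by simp)
  have e : a ^ 2 - ((1 - I : ℤ_[5]) : ℚ_[5]) * 1 ^ 2 = 5 * (b ^ 2 - I * c ^ 2) := by
    push_cast; linear_combination h
  rw [e, norm_mul] at hd'
  by_cases hbc : b ≠ 0 ∨ c ≠ 0
  · obtain ⟨f, hf, hf'⟩ := form_norm I (Or.inr hI) b c hbc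
    have h5 : ‖(5 : ℚ_[5])‖ = (5 : ℝ)⁻¹ := by
      have := Padic.norm_p (p := 5)
      simpa using this
    rw [hf', h5] at hd'
    have hq : d / f ≠ 0 := div_ne_zero hd hf
    have h1 : ‖d / f‖ ^ 2 = (5 : ℝ)⁻¹ := by
      have : ‖f‖ ≠ 0 := norm_ne_zero_iff.2 hf
      rw [norm_div, div_pow, ← hd']; field_simp
    rw [Padic.norm_eq_zpow_neg_valuation hq] at h1
    rw [← zpow_natCast, ← zpow_mul, ← zpow_neg_one] at h1
    have := zpow_right_injective₀ (a := (5 : ℝ)) (by norm_num) (by norm_num) h1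
    omega
  · push Not at hbc
    have : ‖d‖ ≠ 0 := norm_ne_zero_iff.2 hd
    rw [hbc.1, hbc.2] at hd'
    simp at hd'
    exact hd (norm_eq_zero.1 (pow_eq_zero_iff (two_ne_zero)|>.1 hd'.symm))

lemma case2 (I : ℤ_[5]) (hI : PadicInt.toZMod I = 2) (hI2 : I ^ 2 = -1) (a : ℚ_[5])
    (h : I * a ^ 2 = 1 - I) : False := by
  obtain ⟨d, hd, hd'⟩ := form_norm (-1 - I) (by
    left; rw [map_sub, map_neg, map_one, hI]; decide) a 1 (by simp)
  have hI3 : (I : ℚ_[5]) ^ 2 = -1 := by exact_mod_cast congrArg (fun x : ℤ_[5] => (x : ℚ_[5])) hI2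
  have e : a ^ 2 - ((-1 - I : ℤ_[5]) : ℚ_[5]) * 1 ^ 2 = 0 := by
    push_cast; linear_combination (-(I : ℚ_[5])) * h + (a ^ 2 + 1) * hI3
  rw [e] at hd'
  simp at hd'
  exact hd (norm_eq_zero.1 (pow_eq_zero_iff (two_ne_zero)|>.1 hd'.symm))

lemma irr : Irreducible ((X : ℚ[X]) ^ 2 + C 1) := by
  have hd : ((X : ℚ[X]) ^ 2 + C 1).natDegree = 2 := natDegree_X_pow_add_C
  rw [Polynomial.irreducible_iff_roots_eq_zero_of_degree_le_three (by omega) (by omega)]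
  rw [Multiset.eq_zero_iff_forall_notMem]
  intro x hx
  have := (mem_roots'.1 hx).2
  simp [IsRoot] at this
  nlinarith [sq_nonneg x]

lemma exists_hom (I : ℤ_[5]) (hI2 : I ^ 2 = -1) :
    ∃ f : QI →+* ℚ_[5], Function.Injective f ∧ f iota = I := by
  have hI3 : (I : ℚ_[5]) ^ 2 = -1 := by exact_mod_cast congrArg (fun x : ℤ_[5] => (x : ℚ_[5])) hI2
  haveI : Fact (Irreducible ((X : ℚ[X]) ^ 2 + C 1)) := ⟨irr⟩
  let g : AdjoinRoot ((X : ℚ[X]) ^ 2 + C 1) →+* ℚ_[5] :=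
    AdjoinRoot.lift (algebraMap ℚ ℚ_[5]) (I : ℚ_[5]) (by simp [hI3])
  exact ⟨g, g.injective, AdjoinRoot.lift_root _⟩

/-- for every `z` in the quaternion algebra `(5, i)` over `F = ℚ(i)`,
one has `z·σ(z) ≠ 1 − i` (the full-diversity condition for the iterated Golden code
with `θ = 1 − i`). -/
theorem stmt14 :
    ∀ z : ℍ[QI, 5, iota],
      z * qsigma 5 iota z ≠ ((1 - iota : QI) : ℍ[QI, 5, iota]) := by
  rintro ⟨x0, x1, x2, x3⟩ h
  obtain ⟨I, hI2, hI⟩ := exists_I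
  obtain ⟨f, hf, hfI⟩ := exists_hom I hI2
  obtain ⟨g, hg, hgI⟩ := exists_hom (-I) (by rw [neg_sq, hI2])
  have hr := congrArg QuaternionAlgebra.re h
  have hi := congrArg QuaternionAlgebra.imI h
  have hj := congrArg QuaternionAlgebra.imJ h
  have hk := congrArg QuaternionAlgebra.imK h
  simp [qsigma] at hr hi hj hk
  have fr := congrArg f hr
  have fi := congrArg f hi
  have fj := congrArg f hj
  have fk := congrArg f hk
  simp only [map_add, map_sub, map_mul, map_neg, map_one, map_zero, map_ofNat, hfI] at fr fi fj fk
  have hI3 : (I : ℚ_[5]) ^ 2 = -1 := by exact_mod_cast congrArg (fun x : ℤ_[5] => (x : ℚ_[5])) hI2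
  by_cases h2 : f x2 = 0
  · rw [h2] at fr
    exact case1 I hI (f x0) (f x1) (f x3) (by linear_combination fr)
  · have z0 : x0 = 0 := by
      apply hf; rw [map_zero]
      have : f x2 * f x0 = 0 := by linear_combination fj / 2
      exact (mul_eq_zero.1 this).resolve_left h2
    have z1 : x1 = 0 := by
      apply hf; rw [map_zero]
      have : f x2 * f x1 = 0 := by linear_combination fk / 2
      exact (mul_eq_zero.1 this).resolve_left h2
    have z3 : x3 = 0 := by
      apply hf; rw [map_zero]
      have : f x2 * f x3 = 0 := by linear_combination (-(I : ℚ_[5]) / 2) * fi + f x2 * f x3 * hI3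
      exact (mul_eq_zero.1 this).resolve_left h2
    subst z0 z1 z3
    have gr := congrArg g hr
    simp only [map_add, map_sub, map_mul, map_neg, map_one, map_zero, map_ofNat, hgI] at gr
    exact case2 (-I) (by rw [map_neg, hI]; decide) (by rw [neg_sq, hI2]) (g x2)
      (by linear_combination gr)
end
end
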